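/- Let Φ be a k×n complex matrix of rank r with SVD Φ = UΣV*, and let β₀ > 0. Among all k×n matrices F satisfying F F* = β₀² P_U (where U is the column space of Φ), the matrix F̂ = β₀ Σ_{i=1}^r u_i v_i* uniquely minimizes the squared Frobenius error Tr((Φ−F)*(Φ−F)), and the minimum error equals Σ_{i=1}^r (β₀ − σ_i)², where σ_i are the nonzero singular values of Φ. -/

import Mathlib

/-!
Collect the singular vectors as the columns of `U` and `V`, so that `UᴴU = 1`, `VᴴV = 1` and
`Φ = U S Vᴴ` with `S` the diagonal matrix of singular values. The constraint `F Fᴴ = β² U Uᴴ` forces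
the columns of `F` into the range of `U`, so `F = U Wᴴ` with `W = Fᴴ U` and `WᴴW = β²`
(`eq_mul_of_frame`). For such `F`, expanding the trace and completing the square gives
`‖Φ - F‖² = ∑ (β - σᵢ)² + β⁻¹ ∑ σᵢ ‖wᵢ - β vᵢ‖²` (`trace_error`). The last term is nonnegative and,
as every `σᵢ` is positive, it vanishes only for `W = β V`, that is `F = β U Vᴴ`.
-/

open Matrix

open scoped ComplexOrder in

/-- A matrix whose Gram matrix `F Fᴴ` is a multiple of the projection `U Uᴴ` has its columns in the
range of `U`: the complementary projection `1 - U Uᴴ` annihilates `F Fᴴ`, hence `F`. -/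
lemma eq_mul_of_frame {k n r : ℕ} (U : Matrix (Fin k) (Fin r) ℂ) (F : Matrix (Fin k) (Fin n) ℂ)
    (hU : Uᴴ * U = 1) (c : ℂ) (hF : F * Fᴴ = c • (U * Uᴴ)) :
    F = U * (Fᴴ * U)ᴴ ∧ (Fᴴ * U)ᴴ * (Fᴴ * U) = c • (1 : Matrix (Fin r) (Fin r) ℂ) := by
  constructor
  · have h0 : (1 - U * Uᴴ) * (F * Fᴴ) = 0 := by
      rw [hF, Matrix.mul_smul, Matrix.sub_mul, Matrix.one_mul, Matrix.mul_assoc U,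
        ← Matrix.mul_assoc Uᴴ, hU, Matrix.one_mul, sub_self, smul_zero]
    have h1 : (1 - U * Uᴴ) * F = 0 := by
      rwa [Matrix.mul_self_mul_conjTranspose_eq_zero] at h0
    rw [Matrix.sub_mul, Matrix.one_mul, sub_eq_zero, Matrix.mul_assoc] at h1
    rw [conjTranspose_mul, conjTranspose_conjTranspose]
    exact h1
  · have : (Fᴴ * U)ᴴ * (Fᴴ * U) = Uᴴ * (F * Fᴴ) * U := by
      simp only [conjTranspose_mul, conjTranspose_conjTranspose, Matrix.mul_assoc]
    rw [this, hF, Matrix.mul_smul, Matrix.smul_mul, ← Matrix.mul_assoc, hU, Matrix.one_mul, hU]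

/-- The completed square: the error of `U Wᴴ` exceeds `∑ (β - σᵢ)²` by the `σ`-weighted squared
distance from `W` to `β V`. -/
lemma trace_error {k n r : ℕ} (U : Matrix (Fin k) (Fin r) ℂ) (V W : Matrix (Fin n) (Fin r) ℂ)
    (σ : Fin r → ℝ) (β : ℝ) (hβ : 0 < β) (hU : Uᴴ * U = 1) (hV : Vᴴ * V = 1)
    (hW : Wᴴ * W = ((β : ℂ) ^ 2) • (1 : Matrix (Fin r) (Fin r) ℂ)) :
    trace ((U * diagonal (fun i => (σ i : ℂ)) * Vᴴ - U * Wᴴ)ᴴ *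
      (U * diagonal (fun i => (σ i : ℂ)) * Vᴴ - U * Wᴴ)) =
      ((∑ i, (β - σ i) ^ 2 +
        β⁻¹ * ∑ i, σ i * ∑ a, Complex.normSq (W a i - β * V a i) : ℝ) : ℂ) := by
  set S : Matrix (Fin r) (Fin r) ℂ := diagonal (fun i => (σ i : ℂ)) with hS
  have hSS : Sᴴ = S := by
    rw [hS, diagonal_conjTranspose]; congr 1; ext i; simp
  have hβ' : (β : ℂ) ≠ 0 := by exact_mod_cast hβ.ne'
  have e1 : (U * S * Vᴴ - U * Wᴴ)ᴴ * (U * S * Vᴴ - U * Wᴴ) =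
      (V * S - W) * (Uᴴ * U) * (S * Vᴴ - Wᴴ) := by
    have : U * S * Vᴴ - U * Wᴴ = U * (S * Vᴴ - Wᴴ) := by
      rw [Matrix.mul_sub, Matrix.mul_assoc]
    rw [this, conjTranspose_mul]
    simp only [conjTranspose_sub, conjTranspose_mul, conjTranspose_conjTranspose, hSS,
      Matrix.mul_assoc]
  have e2 : trace ((U * S * Vᴴ - U * Wᴴ)ᴴ * (U * S * Vᴴ - U * Wᴴ)) =
      trace (S * S) - trace (S * (Vᴴ * W)) - trace (S * (Wᴴ * V)) +
        trace (((β : ℂ) ^ 2) • (1 : Matrix (Fin r) (Fin r) ℂ)) := by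
    rw [e1, hU, Matrix.mul_one, trace_mul_comm]
    have : (S * Vᴴ - Wᴴ) * (V * S - W) =
        S * (Vᴴ * V) * S - S * (Vᴴ * W) - (Wᴴ * V) * S + Wᴴ * W := by
      simp only [Matrix.mul_sub, Matrix.sub_mul, Matrix.mul_assoc]; abel
    rw [this, hV, hW, Matrix.mul_one, trace_add, trace_sub, trace_sub, trace_mul_comm (Wᴴ * V) S]
  have e3 : trace (S * ((W - (β : ℂ) • V)ᴴ * (W - (β : ℂ) • V))) =
      2 * (β : ℂ) ^ 2 * trace S - β * (trace (S * (Vᴴ * W)) + trace (S * (Wᴴ * V))) := by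
    have : (W - (β : ℂ) • V)ᴴ * (W - (β : ℂ) • V) =
        (2 * (β : ℂ) ^ 2) • (1 : Matrix (Fin r) (Fin r) ℂ) - (β : ℂ) • (Vᴴ * W + Wᴴ * V) := by
      simp only [conjTranspose_sub, conjTranspose_smul, Matrix.mul_sub, Matrix.sub_mul,
        Matrix.smul_mul, Matrix.mul_smul, hV, hW, Complex.star_def, Complex.conj_ofReal]
      module
    rw [this, Matrix.mul_sub, Matrix.mul_smul, Matrix.mul_smul, Matrix.mul_one, Matrix.mul_add,
      trace_sub, trace_smul, trace_smul, trace_add, smul_eq_mul, smul_eq_mul]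
  have e4 : trace (S * ((W - (β : ℂ) • V)ᴴ * (W - (β : ℂ) • V))) =
      ((∑ i, σ i * ∑ a, Complex.normSq (W a i - β * V a i) : ℝ) : ℂ) := by
    rw [trace]
    push_cast
    refine Finset.sum_congr rfl fun i _ => ?_
    rw [diag_apply, hS, diagonal_mul, mul_apply]
    congr 1
    refine Finset.sum_congr rfl fun a _ => ?_
    rw [Complex.normSq_eq_conj_mul_self]
    simp [conjTranspose_apply]
  have e5 : trace (S * S) = ∑ i, (σ i : ℂ) ^ 2 := by
    simp [hS, diagonal_mul_diagonal, trace_diagonal, pow_two]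
  have e6 : trace S = ∑ i, (σ i : ℂ) := by simp [hS, trace_diagonal]
  have e7 : (∑ i, ((β : ℂ) - σ i) ^ 2) =
      r * (β : ℂ) ^ 2 - 2 * β * ∑ i, (σ i : ℂ) + ∑ i, (σ i : ℂ) ^ 2 := by
    simp only [sub_sq, Finset.sum_add_distrib, Finset.sum_sub_distrib, ← Finset.mul_sum]
    simp
  rw [Complex.ofReal_add, Complex.ofReal_mul, ← e4, e3, e2, e5, e6, trace_smul, trace_one]
  push_cast
  rw [e7]
  simp only [Fintype.card_fin, smul_eq_mul]
  field_simp
  ring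

theorem stmt_8 {k n r : ℕ} (Φ : Matrix (Fin k) (Fin n) ℂ) (hr : Φ.rank = r)
    (u : Fin r → Fin k → ℂ) (v : Fin r → Fin n → ℂ) (σ : Fin r → ℝ)
    (hu : ∀ i j, star (u i) ⬝ᵥ u j = if i = j then (1 : ℂ) else 0)
    (hv : ∀ i j, star (v i) ⬝ᵥ v j = if i = j then (1 : ℂ) else 0)
    (hσ : ∀ i, 0 < σ i)
    (hΦ : Φ = ∑ i, (σ i : ℂ) • vecMulVec (u i) (star (v i)))
    (β₀ : ℝ) (hβ : 0 < β₀) :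
    ((β₀ : ℂ) • ∑ i, vecMulVec (u i) (star (v i))) *
        ((β₀ : ℂ) • ∑ i, vecMulVec (u i) (star (v i)))ᴴ =
      ((β₀ : ℂ) ^ 2) • ∑ i, vecMulVec (u i) (star (u i)) ∧
    Matrix.trace ((Φ - (β₀ : ℂ) • ∑ i, vecMulVec (u i) (star (v i)))ᴴ *
        (Φ - (β₀ : ℂ) • ∑ i, vecMulVec (u i) (star (v i)))) =
      ((∑ i, (β₀ - σ i) ^ 2 : ℝ) : ℂ) ∧
    ∀ F : Matrix (Fin k) (Fin n) ℂ,
      F * Fᴴ = ((β₀ : ℂ) ^ 2) • ∑ i, vecMulVec (u i) (star (u i)) →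
      ((∑ i, (β₀ - σ i) ^ 2 : ℝ) ≤ (Matrix.trace ((Φ - F)ᴴ * (Φ - F))).re ∧
        ((Matrix.trace ((Φ - F)ᴴ * (Φ - F))).re = ∑ i, (β₀ - σ i) ^ 2 →
          F = (β₀ : ℂ) • ∑ i, vecMulVec (u i) (star (v i)))) := by
  obtain ⟨U, hUdef⟩ : ∃ U : Matrix (Fin k) (Fin r) ℂ, U = (Matrix.of u)ᵀ := ⟨_, rfl⟩
  obtain ⟨V, hVdef⟩ : ∃ V : Matrix (Fin n) (Fin r) ℂ, V = (Matrix.of v)ᵀ := ⟨_, rfl⟩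
  have hU : Uᴴ * U = 1 := by
    ext i j
    simpa [hUdef, mul_apply, one_apply, dotProduct] using hu i j
  have hV : Vᴴ * V = 1 := by
    ext i j
    simpa [hVdef, mul_apply, one_apply, dotProduct] using hv i j
  have hUV : ∑ i, vecMulVec (u i) (star (v i)) = U * Vᴴ := by
    ext a b
    simp [hUdef, hVdef, mul_apply, Matrix.sum_apply, vecMulVec_apply]
  have hUU : ∑ i, vecMulVec (u i) (star (u i)) = U * Uᴴ := by
    ext a b
    simp [hUdef, mul_apply, Matrix.sum_apply, vecMulVec_apply]
  have hΦ' : Φ = U * diagonal (fun i => (σ i : ℂ)) * Vᴴ := by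
    rw [hΦ]
    ext a b
    rw [mul_apply]
    simp only [mul_diagonal]
    simp only [hUdef, hVdef, Matrix.sum_apply, vecMulVec_apply, Matrix.smul_apply, smul_eq_mul,
      transpose_apply, of_apply, conjTranspose_apply, Pi.star_apply]
    exact Finset.sum_congr rfl fun i _ => by ring
  have hβV : (β₀ : ℂ) • (U * Vᴴ) = U * ((β₀ : ℂ) • V)ᴴ := by
    simp [conjTranspose_smul]
  rw [hUV, hUU]
  refine ⟨?_, ?_, fun F hF => ?_⟩
  · rw [conjTranspose_smul, conjTranspose_mul, conjTranspose_conjTranspose, Matrix.smul_mul,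
      Matrix.mul_smul, Matrix.mul_assoc, ← Matrix.mul_assoc Vᴴ, hV, Matrix.one_mul, smul_smul,
      Complex.star_def, Complex.conj_ofReal, pow_two]
  · have hW : ((β₀ : ℂ) • V)ᴴ * ((β₀ : ℂ) • V) = ((β₀ : ℂ) ^ 2) • 1 := by
      rw [conjTranspose_smul, Matrix.smul_mul, Matrix.mul_smul, hV, smul_smul,
        Complex.star_def, Complex.conj_ofReal, pow_two]
    rw [hβV, hΦ', trace_error U V _ σ β₀ hβ hU hV hW]
    simp
  · obtain ⟨hF1, hW⟩ := eq_mul_of_frame U F hU _ hF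
    generalize Fᴴ * U = W at hF1 hW
    subst hF1
    rw [hΦ', trace_error U V W σ β₀ hβ hU hV hW, Complex.ofReal_re]
    have hin : ∀ i, 0 ≤ ∑ a, Complex.normSq (W a i - β₀ * V a i) := fun i =>
      Finset.sum_nonneg fun a _ => Complex.normSq_nonneg _
    have hterm : ∀ i ∈ Finset.univ, 0 ≤ σ i * ∑ a, Complex.normSq (W a i - β₀ * V a i) :=
      fun i _ => mul_nonneg (hσ i).le (hin i)
    refine ⟨le_add_of_nonneg_right
      (mul_nonneg (inv_nonneg.2 hβ.le) (Finset.sum_nonneg hterm)), fun h => ?_⟩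
    have h0 := (mul_eq_zero.1 (add_eq_left.1 h)).resolve_left (inv_ne_zero hβ.ne')
    rw [Finset.sum_eq_zero_iff_of_nonneg hterm] at h0
    have hWV : W = (β₀ : ℂ) • V := by
      ext a i
      have h1 := (mul_eq_zero.1 (h0 i (Finset.mem_univ i))).resolve_left (hσ i).ne'
      rw [Finset.sum_eq_zero_iff_of_nonneg fun a _ => Complex.normSq_nonneg _] at h1
      have h2 := Complex.normSq_eq_zero.1 (h1 a (Finset.mem_univ a))
      simpa using sub_eq_zero.1 h2
    rw [hWV, hβV]
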